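/- arXiv:math/0008154 — 3 statements merged into one kernel-verified Lean document; each statement's English description precedes it below -/
import Mathlib

section
/- Let g be a finite-dimensional semisimple Lie algebra over ℂ and let B be a symmetric invariant bilinear form on g. Suppose there exists an alternating bilinear ℂ-valued form h on g such that B([x,y],z) = h([x,y],z) − h([x,z],y) + h([y,z],x) for all x,y,z ∈ g (that is, the 3-cocycle c_B is a coboundary). Then B = 0. -/
/-- Let `g` be a finite-dimensional semisimple complex Lie algebra and `B`
a symmetric invariant bilinear form on `g`.  If the 3-cocycle
`c_B (x, y, z) = B ⁅x, y⁆ z` is a coboundary, i.e. there is an alternating bilinear form `h`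
with `B ⁅x, y⁆ z = h ⁅x, y⁆ z − h ⁅x, z⁆ y + h ⁅y, z⁆ x` for all `x y z`, then `B = 0`. -/
theorem eq_zero_of_cB_coboundary {g : Type*} [LieRing g] [LieAlgebra ℂ g]
    [FiniteDimensional ℂ g] [LieAlgebra.IsSemisimple ℂ g]
    (B : LinearMap.BilinForm ℂ g)
    (hsymm : ∀ x y : g, B x y = B y x)
    (hinv : ∀ x y z : g, B ⁅z, x⁆ y + B x ⁅z, y⁆ = 0)
    (hcob : ∃ h : LinearMap.BilinForm ℂ g, (∀ x : g, h x x = 0) ∧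
      ∀ x y z : g, B ⁅x, y⁆ z = h ⁅x, y⁆ z - h ⁅x, z⁆ y + h ⁅y, z⁆ x) :
    B = 0 := by
  obtain ⟨h, halt, hc⟩ := hcob
  have : LieAlgebra.IsKilling ℂ g := (LieAlgebra.hasTrivialRadical_iff_isKilling ℂ g).mp inferInstance
  have hnd := LieAlgebra.IsKilling.killingForm_nondegenerate ℂ g
  let D : g →ₗ[ℂ] g := (LinearMap.BilinForm.toDual (killingForm ℂ g) hnd).symm.toLinearMap ∘ₗ (B + h)
  have hD : ∀ x y, killingForm ℂ g (D x) y = B x y + h x y := by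
    intro x y
    have := LinearMap.BilinForm.apply_toDual_symm_apply (hB := hnd) ((B + h) x) y
    simpa [D] using this
  have hsk : ∀ x y, h x y = - h y x := by
    intro x y
    have := halt (x + y)
    simp only [map_add, LinearMap.add_apply, halt] at this
    linear_combination this
  have hK : ∀ x y z : g, killingForm ℂ g ⁅x, y⁆ z = - killingForm ℂ g y ⁅x, z⁆ := by
    intro x y z
    rw [← lie_skew, map_neg, LinearMap.neg_apply]
    exact congrArg _ (LieModule.traceForm_apply_lie_apply ℂ g g y x z)
  have hleib : ∀ x y, D ⁅x, y⁆ = ⁅x, D y⁆ - ⁅y, D x⁆ := by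
    intro x y
    rw [← sub_eq_zero]
    refine hnd.1 _ fun z => ?_
    simp only [map_sub, LinearMap.sub_apply, hK, hD]
    have h1 := hinv y z x
    have h2 := hinv x z y
    have h3 := hc x y z
    rw [← lie_skew y x, map_neg, LinearMap.neg_apply] at h2
    rw [hsk y, hsk x]
    linear_combination h1 - h2 - h3
  obtain ⟨a, ha⟩ := LieDerivation.IsKilling.exists_eq_ad (R := ℂ) (L := g) ⟨D, hleib⟩
  have hDa : ∀ x, D x = ⁅a, x⁆ := by
    intro x
    have := congrArg (fun d : LieDerivation ℂ g g => d x) ha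
    simpa using this.symm
  have hsy : ∀ x y, killingForm ℂ g x y = killingForm ℂ g y x :=
    fun x y => LieModule.traceForm_comm ℂ g g x y
  ext x y
  have e1 := hD x y
  have e2 := hD y x
  have e3 := hK a x y
  rw [hDa] at e1 e2
  rw [hsy x] at e3
  have e4 := hsk x y
  have e5 := hsymm x y
  simp only [LinearMap.zero_apply]
  linear_combination (e3 - e1 - e2 - e4 + e5) / 2
end

section
/- Let g be a finite-dimensional semisimple Lie algebra over ℂ and let f be an alternating trilinear ℂ-valued form on g which is a 3-cocycle, i.e. for all x₁,x₂,x₃,x₄ ∈ g, f([x₁,x₂],x₃,x₄) − f([x₁,x₃],x₂,x₄) + f([x₁,x₄],x₂,x₃) + f([x₂,x₃],x₁,x₄) − f([x₂,x₄],x₁,x₃) + f([x₃,x₄],x₁,x₂) = 0. Then there exist a symmetric invariant bilinear form B on g and an alternating bilinear ℂ-valued form h on g such that f(x,y,z) = B([x,y],z) + h([x,y],z) − h([x,z],y) + h([y,z],x) for all x,y,z ∈ g. -/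
theorem exists_casimir_data (g : Type*) [LieRing g] [LieAlgebra ℂ g]
    [FiniteDimensional ℂ g] [LieAlgebra.IsSemisimple ℂ g] :
    ∃ (n : ℕ) (b c : Fin n → g),
      (∀ (T : g →ₗ[ℂ] g →ₗ[ℂ] ℂ) (y : g),
        ∑ i, (T ⁅b i, y⁆ (c i) + T (b i) ⁅c i, y⁆) = 0) ∧
      (∀ w : g, ∑ i, ⁅c i, ⁅b i, w⁆⁆ = w) := by
  classical
  have hN : (killingForm ℂ g).Nondegenerate := LieAlgebra.IsKilling.killingForm_nondegenerate ℂ g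
  have hinv : ∀ x y z : g, killingForm ℂ g ⁅x, y⁆ z = killingForm ℂ g x ⁅y, z⁆ :=
    LieModule.traceForm_apply_lie_apply ℂ g g
  have hcomm : ∀ x y : g, killingForm ℂ g x y = killingForm ℂ g y x :=
    LieModule.traceForm_comm ℂ g g
  let b := Module.finBasis ℂ g
  let c := LinearMap.BilinForm.dualBasis (killingForm ℂ g) hN b
  have hc : ∀ x : g, ∑ i, killingForm ℂ g x (b i) • c i = x := by
    intro x
    conv_rhs => rw [← c.sum_repr x]
    simp only [c, LinearMap.BilinForm.dualBasis_repr_apply]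
  have hcb : LinearMap.BilinForm.dualBasis (killingForm ℂ g) hN c = b :=
    LinearMap.BilinForm.dualBasis_dualBasis hN ⟨fun x y => hcomm x y⟩ b
  have hb : ∀ x : g, ∑ i, killingForm ℂ g x (c i) • b i = x := by
    intro x
    conv_rhs => rw [← b.sum_repr x]
    refine Finset.sum_congr rfl fun i _ => ?_
    rw [← LinearMap.BilinForm.dualBasis_repr_apply hN c x i, hcb]
  refine ⟨_, b, c, ?_, ?_⟩
  · intro T y
    rw [Finset.sum_add_distrib]
    have h1 : ∀ i, T ⁅b i, y⁆ (c i) = ∑ j, killingForm ℂ g ⁅b i, y⁆ (c j) * T (b j) (c i) := by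
      intro i
      conv_lhs => rw [← hb ⁅b i, y⁆]
      simp
    have h2 : ∀ i, T (b i) ⁅c i, y⁆ = ∑ j, killingForm ℂ g ⁅c i, y⁆ (b j) * T (b i) (c j) := by
      intro i
      conv_lhs => rw [← hc ⁅c i, y⁆]
      simp
    simp only [h1, h2]
    rw [Finset.sum_comm, ← Finset.sum_add_distrib]
    refine Finset.sum_eq_zero fun i _ => ?_
    rw [← Finset.sum_add_distrib]
    refine Finset.sum_eq_zero fun j _ => ?_
    rw [hinv (b j), hcomm (b j), ← lie_skew y (c i), map_neg, LinearMap.neg_apply]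
    ring
  · intro w
    have key : ∀ z, killingForm ℂ g (∑ i, ⁅c i, ⁅b i, w⁆⁆) z = killingForm ℂ g w z := by
      intro z
      rw [LieModule.traceForm_apply_apply ℂ g g w z, LinearMap.trace_eq_matrix_trace ℂ c,
        Matrix.trace, map_sum, LinearMap.sum_apply]
      refine Finset.sum_congr rfl fun i _ => ?_
      rw [Matrix.diag_apply, LinearMap.toMatrix_apply,
        LinearMap.BilinForm.dualBasis_repr_apply]
      change _ = killingForm ℂ g ⁅w, ⁅z, c i⁆⁆ (b i)
      rw [← lie_skew, map_neg, LinearMap.neg_apply, hinv, hinv, hcomm _ (b i),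
        ← lie_skew (c i) z, lie_neg, map_neg, neg_neg]
    have := hN.ker_eq_bot
    refine LinearMap.ker_eq_bot.mp this ?_
    ext z
    exact key z

/-- On a finite-dimensional semisimple complex Lie algebra, every alternating
trilinear 3-cocycle `f` is the sum of `c_B` for some symmetric invariant bilinear form `B` and
of the Chevalley differential of an alternating bilinear form `h`. -/
theorem cocycle_eq_cB_add_coboundary {g : Type*} [LieRing g] [LieAlgebra ℂ g]
    [FiniteDimensional ℂ g] [LieAlgebra.IsSemisimple ℂ g]
    (f : g →ₗ[ℂ] g →ₗ[ℂ] g →ₗ[ℂ] ℂ)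
    (falt₁ : ∀ x z : g, f x x z = 0)
    (falt₂ : ∀ x y : g, f x y x = 0)
    (falt₃ : ∀ x y : g, f x y y = 0)
    (fcoc : ∀ x₁ x₂ x₃ x₄ : g,
      f ⁅x₁, x₂⁆ x₃ x₄ - f ⁅x₁, x₃⁆ x₂ x₄ + f ⁅x₁, x₄⁆ x₂ x₃
        + f ⁅x₂, x₃⁆ x₁ x₄ - f ⁅x₂, x₄⁆ x₁ x₃ + f ⁅x₃, x₄⁆ x₁ x₂ = 0) :
    ∃ (B : LinearMap.BilinForm ℂ g) (h : LinearMap.BilinForm ℂ g),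
      (∀ x y : g, B x y = B y x) ∧
      (∀ x y z : g, B ⁅z, x⁆ y + B x ⁅z, y⁆ = 0) ∧
      (∀ x : g, h x x = 0) ∧
      (∀ x y z : g, f x y z
        = B ⁅x, y⁆ z + (h ⁅x, y⁆ z - h ⁅x, z⁆ y + h ⁅y, z⁆ x)) := by
  obtain ⟨n, b, c, h1, h2⟩ := exists_casimir_data g
  have s12 : ∀ x y z, f x y z = - f y x z := by
    intro x y z
    have := falt₁ (x + y) z
    simp only [map_add, LinearMap.add_apply, falt₁] at this
    linear_combination this
  have s23 : ∀ x y z, f x y z = - f x z y := by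
    intro x y z
    have := falt₃ x (y + z)
    simp only [map_add, LinearMap.add_apply, falt₃] at this
    linear_combination this
  have cyc : ∀ x y z, f x y z = f y z x := by
    intro x y z
    rw [s12, s23, neg_neg]
  let φ : LinearMap.BilinForm ℂ g :=
    -∑ i, (f (c i)).compl₂ (LieAlgebra.ad ℂ g (b i))
  have hφ : ∀ y w, φ y w = -∑ i, f (c i) y ⁅b i, w⁆ := by
    intro y w
    simp [φ, LinearMap.sum_apply]
  have main : ∀ y z w : g, f y z w = -φ z ⁅y, w⁆ + φ y ⁅z, w⁆ - φ ⁅y, z⁆ w := by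
    intro y z w
    have hT : ∀ y z w, ∑ i, (f (c i) z ⁅⁅b i, y⁆, w⁆ + f ⁅c i, y⁆ z ⁅b i, w⁆) = 0 := by
      intro y z w
      exact h1 (LinearMap.mk₂ ℂ (fun p q => f q z ⁅p, w⁆) (by simp) (by simp) (by simp)
        (by simp)) y
    have e1 := hT y z w
    have e2 := hT z y w
    have e0 : f y z w = ∑ i, f y z ⁅c i, ⁅b i, w⁆⁆ := by
      rw [← map_sum, h2]
    have e3 : ∀ i, f y z ⁅c i, ⁅b i, w⁆⁆ =
        f (c i) z ⁅b i, ⁅y, w⁆⁆ - f (c i) y ⁅b i, ⁅z, w⁆⁆ + f (c i) ⁅y, z⁆ ⁅b i, w⁆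
        - (f (c i) z ⁅⁅b i, y⁆, w⁆ + f ⁅c i, y⁆ z ⁅b i, w⁆)
        + (f (c i) y ⁅⁅b i, z⁆, w⁆ + f ⁅c i, z⁆ y ⁅b i, w⁆) := by
      intro i
      have k := fcoc (c i) y z ⁅b i, w⁆
      have k1 := cyc ⁅c i, ⁅b i, w⁆⁆ y z
      have k2 := cyc ⁅y, ⁅b i, w⁆⁆ (c i) z
      have k3 := cyc ⁅z, ⁅b i, w⁆⁆ (c i) y
      have k4 := s12 ⁅y, z⁆ (c i) ⁅b i, w⁆
      have k5 : f (c i) z ⁅y, ⁅b i, w⁆⁆ = f (c i) z ⁅b i, ⁅y, w⁆⁆ - f (c i) z ⁅⁅b i, y⁆, w⁆ := by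
        rw [leibniz_lie (b i) y w, map_add]; ring
      have k6 : f (c i) y ⁅z, ⁅b i, w⁆⁆ = f (c i) y ⁅b i, ⁅z, w⁆⁆ - f (c i) y ⁅⁅b i, z⁆, w⁆ := by
        rw [leibniz_lie (b i) z w, map_add]; ring
      linear_combination k - k1 + k2 - k3 - k4 + k5 - k6
    rw [e0, Finset.sum_congr rfl fun i _ => e3 i, Finset.sum_add_distrib, Finset.sum_sub_distrib,
      e1, e2, Finset.sum_add_distrib, Finset.sum_sub_distrib, hφ, hφ, hφ]
    ring
  have inv0 : ∀ x y : g, φ ⁅x, y⁆ y + φ y ⁅x, y⁆ = 0 := by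
    intro x y
    have := main x y y
    rw [falt₃, lie_self, map_zero] at this
    linear_combination this
  have inv1 : ∀ x y z : g, φ ⁅x, y⁆ z + φ ⁅x, z⁆ y + φ y ⁅x, z⁆ + φ z ⁅x, y⁆ = 0 := by
    intro x y z
    have a := inv0 x (y + z)
    simp only [lie_add, map_add, LinearMap.add_apply] at a
    linear_combination a - inv0 x y - inv0 x z
  have hS : ∀ x y, ((2⁻¹ : ℂ) • (φ + φ.flip)) x y = 2⁻¹ * (φ x y + φ y x) := by
    intro x y; simp; try ring
  have hA : ∀ x y, ((2⁻¹ : ℂ) • (φ.flip - φ)) x y = 2⁻¹ * (φ y x - φ x y) := by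
    intro x y; simp; try ring
  refine ⟨(2⁻¹ : ℂ) • (φ + φ.flip), (2⁻¹ : ℂ) • (φ.flip - φ), ?_, ?_, ?_, ?_⟩
  · intro x y
    rw [hS, hS]; ring
  · intro x y z
    rw [hS, hS]
    linear_combination 2⁻¹ * inv1 z x y
  · intro x
    rw [hA]; ring
  · intro x y z
    rw [hS, hA, hA, hA, main x y z]
    have a := inv1 x y z
    have b := inv1 y x z
    rw [← lie_skew y x, map_neg, map_neg, LinearMap.neg_apply] at b
    linear_combination -2⁻¹ * a + 2⁻¹ * b
end

section
/- Let g be a finite-dimensional semisimple Lie algebra over ℂ. Let Z³ denote the space of alternating trilinear ℂ-valued 3-cocycles on g (alternating trilinear f with df = 0), let B³ ⊆ Z³ denote the subspace of 3-coboundaries (forms of the shape (dh)(x,y,z) = h([x,y],z) − h([x,z],y) + h([y,z],x) for an alternating bilinear h), and set H³(g) = Z³/B³. Then the linear map sending a symmetric invariant bilinear form B on g to the class of c_B, where c_B(x,y,z) = B([x,y],z), is a bijection from the space of symmetric invariant bilinear forms on g onto H³(g). -/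
set_option maxSynthPendingDepth 3
set_option maxHeartbeats 1000000
set_option synthInstance.maxHeartbeats 400000

/-- Trilinear `ℂ`-valued forms on `g`. -/
abbrev Trilinear (g : Type*) [LieRing g] [LieAlgebra ℂ g] :=
  g →ₗ[ℂ] g →ₗ[ℂ] g →ₗ[ℂ] ℂ

variable (g : Type*) [LieRing g] [LieAlgebra ℂ g]

/-- The trilinear form `c_B (x, y, z) = B ⁅x, y⁆ z` attached to a bilinear form `B`. -/
noncomputable def cB (B : LinearMap.BilinForm ℂ g) : Trilinear g :=
  LinearMap.mk₂ ℂ (fun x y => B ⁅x, y⁆)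
    (fun x x' y => by simp [add_lie])
    (fun c x y => by simp [smul_lie])
    (fun x y y' => by simp [lie_add])
    (fun c x y => by simp [lie_smul])

/-- `Z³`: the space of alternating trilinear 3-cocycles on `g`. -/
noncomputable def Z3 : Submodule ℂ (Trilinear g) where
  carrier := {f | (∀ x z : g, f x x z = 0) ∧ (∀ x y : g, f x y x = 0) ∧ (∀ x y : g, f x y y = 0) ∧
    ∀ x₁ x₂ x₃ x₄ : g, f ⁅x₁, x₂⁆ x₃ x₄ - f ⁅x₁, x₃⁆ x₂ x₄ + f ⁅x₁, x₄⁆ x₂ x₃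
      + f ⁅x₂, x₃⁆ x₁ x₄ - f ⁅x₂, x₄⁆ x₁ x₃ + f ⁅x₃, x₄⁆ x₁ x₂ = 0}
  add_mem' := by
    rintro a b ⟨ha1, ha2, ha3, ha4⟩ ⟨hb1, hb2, hb3, hb4⟩
    refine ⟨fun x z => ?_, fun x y => ?_, fun x y => ?_, fun x₁ x₂ x₃ x₄ => ?_⟩ <;>
      simp only [LinearMap.add_apply]
    · rw [ha1, hb1]; ring
    · rw [ha2, hb2]; ring
    · rw [ha3, hb3]; ring
    · linear_combination ha4 x₁ x₂ x₃ x₄ + hb4 x₁ x₂ x₃ x₄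
  zero_mem' :=
    ⟨fun x z => by simp, fun x y => by simp, fun x y => by simp,
      fun x₁ x₂ x₃ x₄ => by simp⟩
  smul_mem' := by
    rintro c a ⟨ha1, ha2, ha3, ha4⟩
    refine ⟨fun x z => ?_, fun x y => ?_, fun x y => ?_, fun x₁ x₂ x₃ x₄ => ?_⟩ <;>
      simp only [LinearMap.smul_apply, smul_eq_mul]
    · rw [ha1]; ring
    · rw [ha2]; ring
    · rw [ha3]; ring
    · linear_combination c * ha4 x₁ x₂ x₃ x₄

/-- `B³`: the space of 3-coboundaries, i.e. trilinear forms of the shape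
`(dh)(x, y, z) = h ⁅x, y⁆ z − h ⁅x, z⁆ y + h ⁅y, z⁆ x` for an alternating bilinear `h`. -/
noncomputable def B3 : Submodule ℂ (Trilinear g) where
  carrier := {F | ∃ h : LinearMap.BilinForm ℂ g, (∀ x, h x x = 0) ∧
    ∀ x y z : g, F x y z = h ⁅x, y⁆ z - h ⁅x, z⁆ y + h ⁅y, z⁆ x}
  add_mem' := by
    rintro a b ⟨h, hAlt, hEq⟩ ⟨h', hAlt', hEq'⟩
    refine ⟨h + h', fun x => by simp [hAlt, hAlt'], fun x y z => ?_⟩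
    simp only [LinearMap.add_apply]
    rw [hEq, hEq']; ring
  zero_mem' := ⟨0, by simp, by simp⟩
  smul_mem' := by
    rintro c a ⟨h, hAlt, hEq⟩
    refine ⟨c • h, fun x => by simp [hAlt], fun x y z => ?_⟩
    simp only [LinearMap.smul_apply, smul_eq_mul]
    rw [hEq]; ring

/-- `H³(g) = Z³/B³`, the third cohomology of `g` with trivial coefficients. -/
abbrev H3 := Z3 g ⧸ (B3 g).comap (Z3 g).subtype

/-- The space of symmetric invariant bilinear forms on `g`. -/
noncomputable def symInvForms : Submodule ℂ (LinearMap.BilinForm ℂ g) where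
  carrier := {B | (∀ x y : g, B x y = B y x) ∧ ∀ x y z : g, B ⁅z, x⁆ y + B x ⁅z, y⁆ = 0}
  add_mem' := by
    rintro a b ⟨hs, hi⟩ ⟨hs', hi'⟩
    refine ⟨fun x y => ?_, fun x y z => ?_⟩ <;> simp only [LinearMap.add_apply]
    · rw [hs, hs']
    · linear_combination hi x y z + hi' x y z
  zero_mem' := ⟨fun x y => rfl, fun x y z => by simp⟩
  smul_mem' := by
    rintro c a ⟨hs, hi⟩
    refine ⟨fun x y => ?_, fun x y z => ?_⟩ <;>
      simp only [LinearMap.smul_apply, smul_eq_mul]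
    · rw [hs]
    · linear_combination c * hi x y z

theorem exists_casimir [FiniteDimensional ℂ g] [LieAlgebra.IsSemisimple ℂ g] :
    ∃ (n : ℕ) (e e' : Fin n → g),
      (∀ (P : g →ₗ[ℂ] g →ₗ[ℂ] ℂ) (y : g), ∑ i, P ⁅e i, y⁆ (e' i) = - ∑ i, P (e i) ⁅e' i, y⁆) ∧
      ∀ x : g, ∑ i, ⁅e i, ⁅e' i, x⁆⁆ = x := by
  classical
  have hnd : (killingForm ℂ g).Nondegenerate := LieAlgebra.IsKilling.killingForm_nondegenerate ℂ g
  have hinv : ∀ a b c : g, killingForm ℂ g ⁅a, b⁆ c = killingForm ℂ g a ⁅b, c⁆ :=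
    LieModule.traceForm_apply_lie_apply ℂ g g
  have hsymm : ∀ a b : g, killingForm ℂ g a b = killingForm ℂ g b a :=
    LieModule.traceForm_comm ℂ g g
  let e := Module.finBasis ℂ g
  let e' := LinearMap.BilinForm.dualBasis (killingForm ℂ g) hnd e
  have hd : ∀ i j, killingForm ℂ g (e' i) (e j) = if j = i then 1 else 0 := fun i j =>
    LinearMap.BilinForm.apply_dualBasis_left (B := killingForm ℂ g) hnd e i j
  have he : ∀ (v : g) i, e.repr v i = killingForm ℂ g (e' i) v := by
    intro v i
    have h := congrArg (killingForm ℂ g (e' i)) (e.sum_repr v)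
    rw [← h, map_sum]
    simp only [map_smul, hd, smul_eq_mul, mul_ite, mul_one, mul_zero, Finset.sum_ite_eq',
      Finset.sum_ite_eq, Finset.mem_univ, if_true]
  have he' : ∀ (v : g) i, e'.repr v i = killingForm ℂ g v (e i) := by
    intro v i
    have h := congrArg (fun w => killingForm ℂ g w (e i)) (e'.sum_repr v)
    rw [← h, map_sum, LinearMap.sum_apply]
    simp only [map_smul, LinearMap.smul_apply, hd, smul_eq_mul, mul_ite, mul_one, mul_zero,
      Finset.sum_ite_eq', Finset.sum_ite_eq, Finset.mem_univ, if_true]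
  refine ⟨_, e, e', ?_, ?_⟩
  · intro P y
    have h1 : ∀ i, P ⁅e i, y⁆ (e' i) = ∑ j, killingForm ℂ g (e' j) ⁅e i, y⁆ * P (e j) (e' i) := by
      intro i
      conv_lhs => rw [← e.sum_repr ⁅e i, y⁆]
      simp [he]
    have h2 : ∀ i, P (e i) ⁅e' i, y⁆ = ∑ j, killingForm ℂ g ⁅e' i, y⁆ (e j) * P (e i) (e' j) := by
      intro i
      conv_lhs => rw [← e'.sum_repr ⁅e' i, y⁆]
      simp [he']
    simp only [h1, h2]
    rw [Finset.sum_comm, ← Finset.sum_neg_distrib]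
    refine Finset.sum_congr rfl fun i _ => ?_
    rw [← Finset.sum_neg_distrib]
    refine Finset.sum_congr rfl fun j _ => ?_
    rw [hinv, ← lie_skew y (e j), map_neg]
    ring
  · intro x
    refine e'.ext_elem fun k => ?_
    rw [he', he']
    generalize e k = y
    rw [map_sum, LinearMap.sum_apply, killingForm_apply_apply, LinearMap.trace_eq_matrix_trace ℂ e,
      Matrix.trace]
    refine Finset.sum_congr rfl fun i _ => ?_
    rw [Matrix.diag_apply, LinearMap.toMatrix_apply, he]
    simp only [LinearMap.comp_apply, LieAlgebra.ad_apply]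
    rw [← hinv, ← lie_skew, map_neg, LinearMap.neg_apply, hinv, ← lie_skew (e i) y, map_neg, neg_neg]

theorem cB_apply (B : LinearMap.BilinForm ℂ g) (x y z : g) : cB g B x y z = B ⁅x, y⁆ z := rfl

theorem cB_mem (B : LinearMap.BilinForm ℂ g) (hB : B ∈ symInvForms g) : cB g B ∈ Z3 g := by
  obtain ⟨hs, hi⟩ := hB
  have h2 : ∀ x y : g, B ⁅x, y⁆ x = 0 := by
    intro x y
    have h := hi y x x
    rw [lie_self, map_zero, add_zero] at h
    exact h
  have h3 : ∀ x y : g, B ⁅x, y⁆ y = 0 := by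
    intro x y
    rw [← lie_skew, map_neg, LinearMap.neg_apply, h2, neg_zero]
  refine ⟨fun x z => ?_, fun x y => ?_, fun x y => ?_, fun a b c d => ?_⟩ <;> simp only [cB_apply]
  · simp
  · exact h2 x y
  · exact h3 x y
  · have key : ∀ u v w : g, B ⁅u, v⁆ w = B u ⁅v, w⁆ := by
      intro u v w
      have := hi u w v
      rw [← lie_skew, map_neg, LinearMap.neg_apply] at this
      linear_combination -this
    have k1 : ∀ q r s : g, B ⁅⁅a, q⁆, r⁆ s = B a ⁅q, ⁅r, s⁆⁆ := fun q r s => by rw [key, key]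
    have k2 : ∀ q r s : g, B ⁅⁅q, r⁆, a⁆ s = - B a ⁅⁅q, r⁆, s⁆ := by
      intro q r s
      rw [← lie_skew, map_neg, LinearMap.neg_apply, key]
    simp only [k2, k1]
    have j : ⁅b, ⁅c, d⁆⁆ = ⁅⁅b, c⁆, d⁆ + ⁅c, ⁅b, d⁆⁆ := leibniz_lie b c d
    have j' := congrArg (B a) j
    have s1 : ⁅⁅b, d⁆, c⁆ = - ⁅c, ⁅b, d⁆⁆ := (lie_skew _ _).symm
    have s2 : ⁅⁅c, d⁆, b⁆ = - ⁅b, ⁅c, d⁆⁆ := (lie_skew _ _).symm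
    have s3 : ⁅d, ⁅b, c⁆⁆ = - ⁅⁅b, c⁆, d⁆ := (lie_skew _ _).symm
    simp only [map_add] at j'
    simp only [s1, s2, s3, map_neg]
    linear_combination (norm := ring_nf) 2 * j'

theorem cB_inj [FiniteDimensional ℂ g] [LieAlgebra.IsSemisimple ℂ g]
    (B : LinearMap.BilinForm ℂ g) (hB : B ∈ symInvForms g) (h : cB g B ∈ B3 g) : B = 0 := by
  obtain ⟨hs, hi⟩ := hB
  obtain ⟨h, ha, he⟩ := h
  obtain ⟨n, e, e', hinv, hcas⟩ := exists_casimir g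
  have hsk : ∀ x y, h x y = - h y x := by
    intro x y
    have := ha (x + y)
    simp only [map_add, LinearMap.add_apply, ha] at this
    linear_combination this
  let b : LinearMap.BilinForm ℂ g := B + h
  have hb : ∀ x y z : g, b ⁅y, z⁆ x = b y ⁅z, x⁆ - b z ⁅y, x⁆ := by
    intro x y z
    have h0 := he x y z
    rw [cB_apply] at h0
    simp only [b, LinearMap.add_apply]
    rw [hsk y, hsk z, ← lie_skew y x, ← lie_skew z x]
    simp only [map_neg, LinearMap.neg_apply]
    have i2 := hi x y z
    rw [← lie_skew z x, ← lie_skew z y, map_neg, map_neg, LinearMap.neg_apply] at i2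
    rw [hs ⁅x, y⁆ z] at h0
    rw [hs ⁅y, z⁆ x, hs y ⁅x, z⁆]
    linear_combination -h0 - i2
  have hfin : ∀ y w : g, b y w = ∑ i, b (e i) ⁅e' i, ⁅y, w⁆⁆ := by
    intro y w
    have h1 : ∑ i, b ⁅y, e i⁆ ⁅e' i, w⁆ = ∑ i, (b y ⁅e i, ⁅e' i, w⁆⁆ - b (e i) ⁅y, ⁅e' i, w⁆⁆) :=
      Finset.sum_congr rfl fun i _ => hb _ _ _
    rw [Finset.sum_sub_distrib, ← map_sum, hcas] at h1
    let P : g →ₗ[ℂ] g →ₗ[ℂ] ℂ := LinearMap.mk₂ ℂ (fun u v => b u ⁅v, w⁆)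
      (by intros; simp) (by intros; simp) (by intros; simp) (by intros; simp)
    have h2 := hinv P y
    simp only [P, LinearMap.mk₂_apply] at h2
    have h3 : ∑ i, b ⁅y, e i⁆ ⁅e' i, w⁆ = - ∑ i, b ⁅e i, y⁆ ⁅e' i, w⁆ := by
      rw [← Finset.sum_neg_distrib]
      refine Finset.sum_congr rfl fun i _ => ?_
      rw [← lie_skew, map_neg, LinearMap.neg_apply]
    have h4 : ∑ i, b (e i) ⁅e' i, ⁅y, w⁆⁆
        = ∑ i, b (e i) ⁅⁅e' i, y⁆, w⁆ + ∑ i, b (e i) ⁅y, ⁅e' i, w⁆⁆ := by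
      rw [← Finset.sum_add_distrib]
      refine Finset.sum_congr rfl fun i _ => ?_
      rw [leibniz_lie, map_add]
    linear_combination -h1 + h3 - h2 - h4
  have hd : ∀ y, B y y = 0 := by
    intro y
    have := hfin y y
    simpa [b, ha] using this
  ext x y
  have := hd (x + y)
  simp only [map_add, LinearMap.add_apply, hd, hs y x] at this
  simp only [LinearMap.zero_apply]
  linear_combination this / 2

theorem cB_surj [FiniteDimensional ℂ g] [LieAlgebra.IsSemisimple ℂ g]
    (f : Trilinear g) (hf : f ∈ Z3 g) : ∃ B ∈ symInvForms g, cB g B - f ∈ B3 g := by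
  obtain ⟨f1, f2, f3, f4⟩ := hf
  obtain ⟨n, e, e', hinv, hcas⟩ := exists_casimir g
  have s12 : ∀ x y z, f x y z = - f y x z := by
    intro x y z
    have := f1 (x + y) z
    simp only [map_add, LinearMap.add_apply, f1] at this
    linear_combination this
  have s23 : ∀ x y z, f x y z = - f x z y := by
    intro x y z
    have := f3 x (y + z)
    simp only [map_add, LinearMap.add_apply, f3] at this
    linear_combination this
  let T : LinearMap.BilinForm ℂ g := LinearMap.mk₂ ℂ (fun y x => ∑ i, f ⁅e i, x⁆ (e' i) y)
    (by intros; simp [Finset.sum_add_distrib]) (by intros; simp [Finset.mul_sum])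
    (by intros; simp [Finset.sum_add_distrib]) (by intros; simp [Finset.mul_sum])
  have hT : ∀ y x, T y x = ∑ i, f ⁅e i, x⁆ (e' i) y := fun _ _ => rfl
  have main : ∀ x y z, f x y z = T z ⁅y, x⁆ - T y ⁅z, x⁆ + T ⁅y, z⁆ x := by
    intro x y z
    have h0 : ∑ i, (f ⁅⁅e i, x⁆, e' i⁆ y z - f ⁅⁅e i, x⁆, y⁆ (e' i) z + f ⁅⁅e i, x⁆, z⁆ (e' i) y
      + f ⁅e' i, y⁆ ⁅e i, x⁆ z - f ⁅e' i, z⁆ ⁅e i, x⁆ y + f ⁅y, z⁆ ⁅e i, x⁆ (e' i)) = 0 :=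
      Finset.sum_eq_zero fun i _ => f4 _ _ _ _
    simp only [Finset.sum_add_distrib, Finset.sum_sub_distrib] at h0
    have t1 : ∑ i, f ⁅⁅e i, x⁆, e' i⁆ y z = - f x y z := by
      let P : g →ₗ[ℂ] g →ₗ[ℂ] ℂ := LinearMap.mk₂ ℂ (fun u v => f ⁅u, v⁆ y z)
        (by intros; simp) (by intros; simp) (by intros; simp) (by intros; simp)
      have h2 := hinv P x
      simp only [P, LinearMap.mk₂_apply] at h2
      rw [h2, ← LinearMap.sum_apply, ← LinearMap.sum_apply, ← map_sum, hcas]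
    have t2 : ∀ y z : g, ∑ i, f ⁅⁅e i, x⁆, y⁆ (e' i) z
        = ∑ i, f ⁅e' i, y⁆ ⁅e i, x⁆ z - T z ⁅y, x⁆ := by
      intro y z
      let P : g →ₗ[ℂ] g →ₗ[ℂ] ℂ := LinearMap.mk₂ ℂ (fun u v => f ⁅u, x⁆ v z)
        (by intros; simp) (by intros; simp) (by intros; simp) (by intros; simp)
      have h2 := hinv P y
      simp only [P, LinearMap.mk₂_apply] at h2
      have h3 : ∑ i, f ⁅e' i, y⁆ ⁅e i, x⁆ z = - ∑ i, f ⁅e i, x⁆ ⁅e' i, y⁆ z := by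
        rw [← Finset.sum_neg_distrib]
        exact Finset.sum_congr rfl fun i _ => s12 _ _ _
      rw [h3, ← h2, hT, ← Finset.sum_sub_distrib]
      refine Finset.sum_congr rfl fun i _ => ?_
      have j : ⁅⁅e i, x⁆, y⁆ = ⁅⁅e i, y⁆, x⁆ - ⁅e i, ⁅y, x⁆⁆ := by
        rw [leibniz_lie (e i) y x, ← lie_skew y]
        abel
      rw [j, map_sub, LinearMap.sub_apply, LinearMap.sub_apply]
    have t3 : ∑ i, f ⁅y, z⁆ ⁅e i, x⁆ (e' i) = T ⁅y, z⁆ x := by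
      rw [hT]
      refine Finset.sum_congr rfl fun i _ => ?_
      rw [s12, s23, neg_neg]
    rw [t1, t2 y z, t2 z y, t3] at h0
    linear_combination -h0
  -- symmetric part
  have hTi : ∀ y z : g, T y ⁅z, y⁆ + T ⁅z, y⁆ y = 0 := by
    intro y z
    have := main y y z
    rw [f1, lie_self, map_zero, ← lie_skew y z, map_neg, LinearMap.neg_apply] at this
    linear_combination this
  have hTi' : ∀ x y z : g, T x ⁅z, y⁆ + T ⁅z, y⁆ x + T y ⁅z, x⁆ + T ⁅z, x⁆ y = 0 := by
    intro x y z
    have h := hTi (x + y) z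
    simp only [lie_add, map_add, LinearMap.add_apply] at h
    linear_combination h - hTi x z - hTi y z
  let B : LinearMap.BilinForm ℂ g := (-(1 / 2 : ℂ)) • (T + T.flip)
  have hBa : ∀ x y, B x y = -(1 / 2) * (T x y + T y x) := fun _ _ => rfl
  let h : LinearMap.BilinForm ℂ g := (-(1 / 2 : ℂ)) • (T - T.flip)
  have hha : ∀ x y, h x y = -(1 / 2) * (T x y - T y x) := fun _ _ => rfl
  refine ⟨B, ⟨fun x y => ?_, fun x y z => ?_⟩, h, fun x => ?_, fun x y z => ?_⟩
  · rw [hBa, hBa]; ring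
  · rw [hBa, hBa]
    linear_combination -(1 / 2) * hTi' x y z
  · rw [hha]; ring
  · simp only [LinearMap.sub_apply, cB_apply, hBa, hha, main x y z]
    have i1 := hTi' x z y
    have i2 := hTi' x y z
    rw [← lie_skew x y, ← lie_skew x z]
    rw [← lie_skew z y] at i2
    simp only [map_neg, LinearMap.neg_apply] at *
    linear_combination (1 / 2) * i2

/-- For a finite-dimensional semisimple complex Lie algebra `g`, the linear
map sending a symmetric invariant bilinear form `B` to the class of
`c_B (x, y, z) = B ⁅x, y⁆ z` in `H³(g) = Z³/B³` is a bijection from the space of symmetric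
invariant bilinear forms onto `H³(g)`. -/
theorem symInvForms_equiv_H3 [FiniteDimensional ℂ g] [LieAlgebra.IsSemisimple ℂ g] :
    ∃ Φ : symInvForms g →ₗ[ℂ] H3 g,
      Function.Bijective Φ ∧
      ∀ B : symInvForms g, ∃ hB : cB g (B : LinearMap.BilinForm ℂ g) ∈ Z3 g,
        Φ B = Submodule.Quotient.mk (⟨cB g (B : LinearMap.BilinForm ℂ g), hB⟩ : Z3 g) := by
  let c : LinearMap.BilinForm ℂ g →ₗ[ℂ] Trilinear g :=
    { toFun := cB g
      map_add' := fun _ _ => rfl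
      map_smul' := fun _ _ => rfl }
  let c' : symInvForms g →ₗ[ℂ] Z3 g :=
    (c.comp (symInvForms g).subtype).codRestrict (Z3 g) fun B => cB_mem g B.1 B.2
  refine ⟨((B3 g).comap (Z3 g).subtype).mkQ.comp c', ⟨?_, ?_⟩, fun B => ⟨cB_mem g B.1 B.2, rfl⟩⟩
  · rw [injective_iff_map_eq_zero]
    intro B hB
    have h1 : c' B ∈ (B3 g).comap (Z3 g).subtype := (Submodule.Quotient.mk_eq_zero _).1 hB
    exact Subtype.ext (cB_inj g B.1 B.2 h1)
  · intro q
    obtain ⟨f, rfl⟩ := Submodule.Quotient.mk_surjective _ q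
    obtain ⟨B, hB, h⟩ := cB_surj g f.1 f.2
    exact ⟨⟨B, hB⟩, (Submodule.Quotient.eq _).2 h⟩
end
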